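/- arXiv:1406.5877 — 3 statements merged into one kernel-verified Lean document; each statement's English description precedes it below -/
import Mathlib

section
/- The third-order equation of motion (35) of the semi-classical spinning particle is locally variational: fix parameters (s⁰, 𝐬) ∈ ℝ × ℝ³ with (s⁰, 𝐬) ≠ 0 and m ∈ ℝ, and let 𝐄 be the ℝ³-valued expression of equation (35) in the context. Then every point (t₀, x₀, v₀, v′₀) ∈ ℝ × ℝ³ × ℝ³ × ℝ³ with Δ(v₀) > 0 has an open neighborhood U and a smooth function L = L(t,x,v,v′) on U such that for every smooth curve c : I → ℝ³ whose prolongation (t, c(t), ċ(t), c̈(t)) lies in U, the Euler–Poisson expressions of L satisfy E_a[L,c](t) = 𝐄_a(ċ(t), c̈(t), c⃛(t)) for all a and t. -/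
noncomputable section

/-- Partial derivative in `t` of a function `F(t,x,v)` on `ℝ × ℝ^q × ℝ^q`. -/
def pdt {q : ℕ} (F : ℝ → (Fin q → ℝ) → (Fin q → ℝ) → ℝ)
    (t : ℝ) (x v : Fin q → ℝ) : ℝ :=
  deriv (fun s => F s x v) t

/-- Partial derivative in `x^a` of a function `F(t,x,v)`. -/
def pdx {q : ℕ} (a : Fin q) (F : ℝ → (Fin q → ℝ) → (Fin q → ℝ) → ℝ)
    (t : ℝ) (x v : Fin q → ℝ) : ℝ :=
  deriv (fun s : ℝ => F t (x + s • (Pi.single a 1 : Fin q → ℝ)) v) 0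

/-- Partial derivative in `v^a` of a function `F(t,x,v)`. -/
def pdv {q : ℕ} (a : Fin q) (F : ℝ → (Fin q → ℝ) → (Fin q → ℝ) → ℝ)
    (t : ℝ) (x v : Fin q → ℝ) : ℝ :=
  deriv (fun s : ℝ => F t x (v + s • (Pi.single a 1 : Fin q → ℝ))) 0

/-- The total-derivative operator `D₁ = ∂_t + v^a ∂_{x^a}`. -/
def D1 {q : ℕ} (F : ℝ → (Fin q → ℝ) → (Fin q → ℝ) → ℝ) :
    ℝ → (Fin q → ℝ) → (Fin q → ℝ) → ℝ :=
  fun t x v => pdt F t x v + ∑ a, v a * pdx a F t x v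

/-- Partial derivative in `x^a` of a Lagrange function `L(t,x,v,v′)`. -/
def pLx {q : ℕ} (a : Fin q) (L : ℝ → (Fin q → ℝ) → (Fin q → ℝ) → (Fin q → ℝ) → ℝ)
    (t : ℝ) (x v w : Fin q → ℝ) : ℝ :=
  deriv (fun s : ℝ => L t (x + s • (Pi.single a 1 : Fin q → ℝ)) v w) 0

/-- Partial derivative in `v^a` of a Lagrange function `L(t,x,v,v′)`. -/
def pLv {q : ℕ} (a : Fin q) (L : ℝ → (Fin q → ℝ) → (Fin q → ℝ) → (Fin q → ℝ) → ℝ)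
    (t : ℝ) (x v w : Fin q → ℝ) : ℝ :=
  deriv (fun s : ℝ => L t x (v + s • (Pi.single a 1 : Fin q → ℝ)) w) 0

/-- Partial derivative in `v′^a` of a Lagrange function `L(t,x,v,v′)`. -/
def pLw {q : ℕ} (a : Fin q) (L : ℝ → (Fin q → ℝ) → (Fin q → ℝ) → (Fin q → ℝ) → ℝ)
    (t : ℝ) (x v w : Fin q → ℝ) : ℝ :=
  deriv (fun s : ℝ => L t x v (w + s • (Pi.single a 1 : Fin q → ℝ))) 0

/-- The Euler–Poisson (Euler–Lagrange) expressions
`E_a[L,c](t) = ∂L/∂x^a − (d/dt)(∂L/∂v^a) + (d²/dt²)(∂L/∂v′^a)` of a second-order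
Lagrange function `L(t,x,v,v′)` along a curve `c`, all partial derivatives evaluated
along the prolonged curve `t ↦ (t, c(t), ċ(t), c̈(t))`. -/
def eulerPoisson {q : ℕ} (L : ℝ → (Fin q → ℝ) → (Fin q → ℝ) → (Fin q → ℝ) → ℝ)
    (c : ℝ → (Fin q → ℝ)) (t : ℝ) (a : Fin q) : ℝ :=
  pLx a L t (c t) (deriv c t) (deriv (deriv c) t)
    - deriv (fun τ => pLv a L τ (c τ) (deriv c τ) (deriv (deriv c) τ)) t
    + deriv (deriv (fun τ => pLw a L τ (c τ) (deriv c τ) (deriv (deriv c) τ))) t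

/-- The third-order expression (20):
`E_a = A_{ab} v″^b + v′^c (∂A_{ab}/∂v^c) v′^b + B_{ab} v′^b + c_a`. -/
def expr20 {q : ℕ} (A B : Fin q → Fin q → ℝ → (Fin q → ℝ) → (Fin q → ℝ) → ℝ)
    (cc : Fin q → ℝ → (Fin q → ℝ) → (Fin q → ℝ) → ℝ)
    (a : Fin q) (t : ℝ) (x v v' v'' : Fin q → ℝ) : ℝ :=
  (∑ b, A a b t x v * v'' b)
    + (∑ c, ∑ b, v' c * pdv c (A a b) t x v * v' b)
    + (∑ b, B a b t x v * v' b) + cc a t x v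

/-- The Helmholtz-type conditions (21) on a triple `(A,B,c)`, imposed at every point of
a set `Ω ⊆ ℝ × ℝ^q × ℝ^q`.  Square (round) brackets in the paper denote
antisymmetrization (symmetrization) with weight `1/k!`, written out explicitly here. -/
def cond21On {q : ℕ} (Ω : Set (ℝ × (Fin q → ℝ) × (Fin q → ℝ)))
    (A B : Fin q → Fin q → ℝ → (Fin q → ℝ) → (Fin q → ℝ) → ℝ)
    (cc : Fin q → ℝ → (Fin q → ℝ) → (Fin q → ℝ) → ℝ) : Prop :=
  ∀ p ∈ Ω, ∀ a b c : Fin q,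
    -- (i)  ∂_{v^{[a}} A_{bc]} = 0
    (pdv a (A b c) p.1 p.2.1 p.2.2 - pdv b (A a c) p.1 p.2.1 p.2.2
      - pdv c (A b a) p.1 p.2.1 p.2.2 - pdv a (A c b) p.1 p.2.1 p.2.2
      + pdv b (A c a) p.1 p.2.1 p.2.2 + pdv c (A a b) p.1 p.2.1 p.2.2) / 6 = 0 ∧
    -- (ii)  2 B_{[ab]} − 3 D₁ A_{ab} = 0
    2 * ((B a b p.1 p.2.1 p.2.2 - B b a p.1 p.2.1 p.2.2) / 2)
      - 3 * D1 (A a b) p.1 p.2.1 p.2.2 = 0 ∧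
    -- (iii)  2 ∂_{v^{[a}} B_{b]c} − 4 ∂_{x^{[a}} A_{b]c} + ∂_{x^c} A_{ab}
    --        + 2 D₁ ∂_{v^c} A_{ab} = 0
    2 * ((pdv a (B b c) p.1 p.2.1 p.2.2 - pdv b (B a c) p.1 p.2.1 p.2.2) / 2)
      - 4 * ((pdx a (A b c) p.1 p.2.1 p.2.2 - pdx b (A a c) p.1 p.2.1 p.2.2) / 2)
      + pdx c (A a b) p.1 p.2.1 p.2.2
      + 2 * D1 (pdv c (A a b)) p.1 p.2.1 p.2.2 = 0 ∧
    -- (iv)  ∂_{v^{(a}} c_{b)} − D₁ B_{(ab)} = 0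
    (pdv a (cc b) p.1 p.2.1 p.2.2 + pdv b (cc a) p.1 p.2.1 p.2.2) / 2
      - D1 (fun t x v => (B a b t x v + B b a t x v) / 2) p.1 p.2.1 p.2.2 = 0 ∧
    -- (v)  2 ∂_{v^c} ∂_{v^{[a}} c_{b]} − 4 ∂_{x^{[a}} B_{b]c} + D₁² ∂_{v^c} A_{ab}
    --      + 6 D₁ ∂_{x^{[a}} A_{bc]} = 0
    2 * pdv c (fun t x v => (pdv a (cc b) t x v - pdv b (cc a) t x v) / 2)
          p.1 p.2.1 p.2.2
      - 4 * ((pdx a (B b c) p.1 p.2.1 p.2.2 - pdx b (B a c) p.1 p.2.1 p.2.2) / 2)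
      + D1 (D1 (pdv c (A a b))) p.1 p.2.1 p.2.2
      + 6 * D1 (fun t x v =>
          (pdx a (A b c) t x v - pdx b (A a c) t x v - pdx c (A b a) t x v
            - pdx a (A c b) t x v + pdx b (A c a) t x v + pdx c (A a b) t x v) / 6)
          p.1 p.2.1 p.2.2 = 0 ∧
    -- (vi)  4 ∂_{x^{[a}} c_{b]} − 2 D₁ ∂_{v^{[a}} c_{b]} − D₁³ A_{ab} = 0
    4 * ((pdx a (cc b) p.1 p.2.1 p.2.2 - pdx b (cc a) p.1 p.2.1 p.2.2) / 2)
      - 2 * D1 (fun t x v => (pdv a (cc b) t x v - pdv b (cc a) t x v) / 2)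
          p.1 p.2.1 p.2.2
      - D1 (D1 (D1 (A a b))) p.1 p.2.1 p.2.2 = 0

open Matrix

/-- `Δ(v) = (1 + v·v)(s⁰² + 𝐬·𝐬) − (s⁰ + 𝐬·v)²`. -/
def sDelta (s0 : ℝ) (s v : Fin 3 → ℝ) : ℝ :=
  (1 + v ⬝ᵥ v) * (s0 ^ 2 + s ⬝ᵥ s) - (s0 + s ⬝ᵥ v) ^ 2

/-- The third-order expression (35) of the semi-classical spinning particle. -/
def spinE (s0 : ℝ) (s : Fin 3 → ℝ) (m : ℝ) (v v' v'' : Fin 3 → ℝ) : Fin 3 → ℝ :=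
  (sDelta s0 s v ^ ((3 : ℝ) / 2))⁻¹ • crossProduct v'' (s - s0 • v)
    - (3 * ((s0 ^ 2 + s ⬝ᵥ s) * (v' ⬝ᵥ v) - (s0 + s ⬝ᵥ v) * (s ⬝ᵥ v'))
        / sDelta s0 s v ^ ((5 : ℝ) / 2)) • crossProduct v' (s - s0 • v)
    + (m / ((1 + v ⬝ᵥ v) ^ ((3 : ℝ) / 2) * (s0 ^ 2 + s ⬝ᵥ s) ^ ((3 : ℝ) / 2))) •
        ((1 + v ⬝ᵥ v) • v' - (v' ⬝ᵥ v) • v)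

/-!
The expression (35) is the time derivative of a momentum `P(v, v′)`, so a Lagrange function
`p(v) · v′ + l(v)` works as soon as `curl p` yields the part of `P` linear in `v′` and `-∂l` the
remaining, free relativistic part.

Read `σ = s⁰ + 𝐬` as a quaternion and let `y(v)` be the vector part of `1 + v` times the conjugate
of `σ`. Then `y · y = Δ`, and the required `curl p` is, up to the factor `|σ|⁻²`, the pullback along
the affine map `y` of the field `y / |y|³` of a magnetic monopole. That field is divergence-free but
has no vector potential on all of `{y ≠ 0}`; Dirac's potential, singular along a single ray, is one
near any given point.
-/

section VectorCalculus

variable {ι κ : Type*} [Fintype ι] [Fintype κ]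

lemma hasDerivAt_dotProduct {f g : ℝ → ι → ℝ} {f' g' : ι → ℝ} {t : ℝ}
    (hf : HasDerivAt f f' t) (hg : HasDerivAt g g' t) :
    HasDerivAt (fun τ => f τ ⬝ᵥ g τ) (f t ⬝ᵥ g' + f' ⬝ᵥ g t) t :=
  (dotProductBilin ℝ ℝ : (ι → ℝ) →ₗ[ℝ] _).toContinuousBilinearMap.hasDerivAt_of_bilinear
    (fun _ => hf) (fun _ => hg)

lemma hasDerivAt_dotProduct_self {g : ℝ → ι → ℝ} {g' : ι → ℝ} {t : ℝ}
    (hg : HasDerivAt g g' t) : HasDerivAt (fun τ => g τ ⬝ᵥ g τ) (2 * (g t ⬝ᵥ g')) t :=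
  (hasDerivAt_dotProduct hg hg).congr_deriv (by rw [dotProduct_comm g', two_mul])

lemma hasDerivAt_sqrt_dotProduct_self {g : ℝ → ι → ℝ} {g' : ι → ℝ} {t : ℝ}
    (hg : HasDerivAt g g' t) (hpos : 0 < g t ⬝ᵥ g t) :
    HasDerivAt (fun τ => √(g τ ⬝ᵥ g τ)) (g t ⬝ᵥ g' / √(g t ⬝ᵥ g t)) t :=
  ((hasDerivAt_dotProduct_self hg).sqrt hpos.ne').congr_deriv
    (mul_div_mul_left _ _ two_ne_zero)

lemma hasDerivAt_crossProduct {f g : ℝ → Fin 3 → ℝ} {f' g' : Fin 3 → ℝ} {t : ℝ}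
    (hf : HasDerivAt f f' t) (hg : HasDerivAt g g' t) :
    HasDerivAt (fun τ => f τ ⨯₃ g τ) (f t ⨯₃ g' + f' ⨯₃ g t) t :=
  crossProduct.toContinuousBilinearMap.hasDerivAt_of_bilinear (fun _ => hf) (fun _ => hg)

lemma hasDerivAt_add_smul {E : Type*} [NormedAddCommGroup E] [NormedSpace ℝ E] (v w : E) :
    HasDerivAt (fun τ : ℝ => v + τ • w) w 0 := by
  simpa using ((hasDerivAt_id (0 : ℝ)).smul_const w).const_add v

lemma hasDerivAt_inv_rpow {D : ℝ → ℝ} {D' t : ℝ} (hD : HasDerivAt D D' t) (hpos : 0 < D t)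
    (r : ℝ) : HasDerivAt (fun τ => (D τ ^ r)⁻¹) (-(r * D' / D t ^ (r + 1))) t := by
  have hpow : 0 < D t ^ r := Real.rpow_pos_of_pos hpos r
  refine ((hD.rpow_const (Or.inl hpos.ne')).inv hpow.ne').congr_deriv ?_
  rw [Real.rpow_sub_one hpos.ne', Real.rpow_add_one hpos.ne']
  field_simp

lemma contDiffOn_dotProduct {E : Type*} [NormedAddCommGroup E] [NormedSpace ℝ E]
    {k : WithTop ℕ∞} {S : Set E} {f g : E → ι → ℝ} (hf : ContDiffOn ℝ k f S)
    (hg : ContDiffOn ℝ k g S) : ContDiffOn ℝ k (fun x => f x ⬝ᵥ g x) S :=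
  ContDiffOn.sum fun i _ => (contDiffOn_pi.1 hf i).mul (contDiffOn_pi.1 hg i)

lemma contDiff_dotProduct_self {k : WithTop ℕ∞} :
    ContDiff ℝ k fun v : ι → ℝ => v ⬝ᵥ v := by
  unfold dotProduct
  fun_prop

/-- The exterior derivative, evaluated on the pair `(w, u)`, of the one-form `∑ b, p b dv^b`
with coefficient vector `p`. In dimension three it is `curl p · (w × u)`. -/
def curlForm (p : (ι → ℝ) → ι → ℝ) (v w u : ι → ℝ) : ℝ :=
  fderiv ℝ p v w ⬝ᵥ u - fderiv ℝ p v u ⬝ᵥ w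

lemma curlForm_smul {f : (ι → ℝ) → ℝ} {p : (ι → ℝ) → ι → ℝ} {v : ι → ℝ}
    (hf : DifferentiableAt ℝ f v) (hp : DifferentiableAt ℝ p v) (w u : ι → ℝ) :
    curlForm (fun x => f x • p x) v w u
      = f v * curlForm p v w u + (fderiv ℝ f v w * (p v ⬝ᵥ u) - fderiv ℝ f v u * (p v ⬝ᵥ w)) := by
  simp only [curlForm, fderiv_fun_smul hf hp, _root_.add_apply,
    _root_.smul_apply, ContinuousLinearMap.smulRight_apply, add_dotProduct, smul_dotProduct,
    smul_eq_mul]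
  ring

lemma curlForm_const_smul (r : ℝ) {p : (ι → ℝ) → ι → ℝ} {v : ι → ℝ}
    (hp : DifferentiableAt ℝ p v) (w u : ι → ℝ) :
    curlForm (fun x => r • p x) v w u = r * curlForm p v w u := by
  simp [curlForm_smul (differentiableAt_const r) hp]

lemma curlForm_crossProduct (n y w u : Fin 3 → ℝ) :
    curlForm (fun x => n ⨯₃ x) y w u = 2 * (n ⬝ᵥ w ⨯₃ u) := by
  have hfderiv : fderiv ℝ (fun x => n ⨯₃ x) y = (crossProduct n).toContinuousLinearMap :=
    (crossProduct n).toContinuousLinearMap.fderiv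
  have hw : n ⨯₃ w ⬝ᵥ u = n ⬝ᵥ w ⨯₃ u := by
    rw [dotProduct_comm, triple_product_permutation]
  have hu : n ⨯₃ u ⬝ᵥ w = -(n ⬝ᵥ w ⨯₃ u) := by
    rw [dotProduct_comm, triple_product_permutation, ← cross_anticomm, dotProduct_neg]
  simp only [curlForm, hfderiv, LinearMap.coe_toContinuousLinearMap', hw, hu]
  ring

lemma curlForm_pullback (M : Matrix ι κ ℝ) (b : ι → ℝ) {A : (ι → ℝ) → ι → ℝ} {v : κ → ℝ}
    (hA : DifferentiableAt ℝ A (M *ᵥ v + b)) (w u : κ → ℝ) :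
    curlForm (fun x => Mᵀ *ᵥ A (M *ᵥ x + b)) v w u
      = curlForm A (M *ᵥ v + b) (M *ᵥ w) (M *ᵥ u) := by
  have hfderiv (w : κ → ℝ) : fderiv ℝ (fun x => Mᵀ *ᵥ A (M *ᵥ x + b)) v w
      = Mᵀ *ᵥ fderiv ℝ A (M *ᵥ v + b) (M *ᵥ w) := by
    have haffine := M.mulVecLin.toContinuousLinearMap.hasFDerivAt (x := v) |>.add_const b
    have hcomp := Mᵀ.mulVecLin.toContinuousLinearMap.hasFDerivAt.comp v
      (hA.hasFDerivAt.comp v haffine)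
    exact congrArg (· w) hcomp.fderiv
  simp only [curlForm, hfderiv]
  simp only [mulVec_transpose, ← dotProduct_mulVec]

end VectorCalculus

section AffineLagrangian

variable {q : ℕ} {p : (Fin q → ℝ) → Fin q → ℝ} {l : (Fin q → ℝ) → ℝ}

lemma pLx_affine (a : Fin q) (t : ℝ) (x v w : Fin q → ℝ) :
    pLx a (fun _ _ v w => p v ⬝ᵥ w + l v) t x v w = 0 :=
  deriv_const 0 _

lemma pLv_affine {v : Fin q → ℝ} (hp : DifferentiableAt ℝ p v) (hl : DifferentiableAt ℝ l v)
    (a : Fin q) (t : ℝ) (x w : Fin q → ℝ) :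
    pLv a (fun _ _ v w => p v ⬝ᵥ w + l v) t x v w
      = fderiv ℝ p v (Pi.single a 1) ⬝ᵥ w + fderiv ℝ l v (Pi.single a 1) := by
  have hpline := hp.hasFDerivAt.hasLineDerivAt (Pi.single a 1)
  have hlline := hl.hasFDerivAt.hasLineDerivAt (Pi.single a 1)
  have hderiv := (hasDerivAt_dotProduct hpline (hasDerivAt_const 0 w)).add hlline
  rw [dotProduct_zero, zero_add] at hderiv
  exact hderiv.deriv

lemma pLw_affine (a : Fin q) (t : ℝ) (x v w : Fin q → ℝ) :
    pLw a (fun _ _ v w => p v ⬝ᵥ w + l v) t x v w = p v a := by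
  have hderiv := (hasDerivAt_dotProduct (hasDerivAt_const 0 (p v))
    (hasDerivAt_add_smul w (Pi.single a 1))).add_const (l v)
  rw [zero_dotProduct, add_zero, dotProduct_single_one] at hderiv
  exact hderiv.deriv

lemma deriv_pLw_affine {x v w : ℝ → Fin q → ℝ} {v' : Fin q → ℝ} {t : ℝ}
    (hp : DifferentiableAt ℝ p (v t)) (hv : HasDerivAt v v' t) (a : Fin q) :
    deriv (fun τ => pLw a (fun _ _ v w => p v ⬝ᵥ w + l v) τ (x τ) (v τ) (w τ)) t
      = fderiv ℝ p (v t) v' ⬝ᵥ Pi.single a 1 := by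
  simp only [pLw_affine, dotProduct_single_one]
  exact (hasDerivAt_pi.1 (hp.hasFDerivAt.comp_hasDerivAt t hv) a).deriv

lemma eulerPoisson_affine {V : Set (Fin q → ℝ)} (hV : IsOpen V) (hp : ContDiffOn ℝ 2 p V)
    (hl : ContDiffOn ℝ 2 l V) {I : Set ℝ} (hI : IsOpen I) {c : ℝ → Fin q → ℝ}
    (hc : ContDiffOn ℝ 3 c I) (hcV : Set.MapsTo (deriv c) I V) {t : ℝ} (ht : t ∈ I) (a : Fin q) :
    eulerPoisson (fun _ _ v w => p v ⬝ᵥ w + l v) c t a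
      = deriv (fun τ => curlForm p (deriv c τ) (deriv (deriv c) τ) (Pi.single a 1)
          - fderiv ℝ l (deriv c τ) (Pi.single a 1)) t := by
  have differentiableAt_of_mem {F : Type} [NormedAddCommGroup F] [NormedSpace ℝ F] {f : ℝ → F}
      (hf : ContDiffOn ℝ 1 f I) {τ : ℝ} (hτ : τ ∈ I) : DifferentiableAt ℝ f τ :=
    (hf.contDiffAt (hI.mem_nhds hτ)).differentiableAt one_ne_zero
  have hc' : ContDiffOn ℝ 2 (deriv c) I := hc.deriv_of_isOpen hI (by norm_num)
  have hc'' : ContDiffOn ℝ 1 (deriv (deriv c)) I := hc'.deriv_of_isOpen hI (by norm_num)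
  have hdp : ContDiffOn ℝ 1 (fun τ => fderiv ℝ p (deriv c τ)) I :=
    (hp.fderiv_of_isOpen hV (by norm_num)).comp (hc'.of_le (by norm_num)) hcV
  have hdl : ContDiffOn ℝ 1 (fun τ => fderiv ℝ l (deriv c τ)) I :=
    (hl.fderiv_of_isOpen hV (by norm_num)).comp (hc'.of_le (by norm_num)) hcV
  have hpV {τ : ℝ} (hτ : τ ∈ I) : DifferentiableAt ℝ p (deriv c τ) :=
    (hp.contDiffAt (hV.mem_nhds (hcV hτ))).differentiableAt two_ne_zero
  have hlV {τ : ℝ} (hτ : τ ∈ I) : DifferentiableAt ℝ l (deriv c τ) :=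
    (hl.contDiffAt (hV.mem_nhds (hcV hτ))).differentiableAt two_ne_zero
  have hpLv := (hI.eventually_mem ht).mono fun τ hτ =>
    pLv_affine (hpV hτ) (hlV hτ) a τ (c τ) (deriv (deriv c) τ)
  have hpLw := (hI.eventually_mem ht).mono fun τ hτ =>
    deriv_pLw_affine (l := l) (x := c) (w := deriv (deriv c)) (hpV hτ)
      (differentiableAt_of_mem (hc'.of_le one_le_two) hτ).hasDerivAt a
  have hpLv_diff := ((hasDerivAt_dotProduct
    (differentiableAt_of_mem (hdp.clm_apply (contDiffOn_const (c := Pi.single a 1))) ht).hasDerivAt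
    (differentiableAt_of_mem hc'' ht).hasDerivAt).differentiableAt.fun_add
      (differentiableAt_of_mem (hdl.clm_apply (contDiffOn_const (c := Pi.single a 1))) ht))
  have hpLw_diff := (hasDerivAt_dotProduct
    (differentiableAt_of_mem (hdp.clm_apply hc'') ht).hasDerivAt
    (hasDerivAt_const t (Pi.single a 1))).differentiableAt
  rw [eulerPoisson, pLx_affine, Filter.EventuallyEq.deriv_eq hpLv,
    Filter.EventuallyEq.deriv_eq hpLw, zero_sub, neg_add_eq_sub,
    ← deriv_fun_sub hpLw_diff hpLv_diff]
  simp only [curlForm, sub_sub]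

end AffineLagrangian

section DiracMonopole

variable {ι : Type*} [Fintype ι] {n y : ι → ℝ}

/-- The quantity `|n| |y| + n · y`, which is nonnegative and vanishes exactly on the ray opposite
to `n` (for `n ≠ 0`). -/
def diracDenom (n y : ι → ℝ) : ℝ :=
  √(n ⬝ᵥ n) * √(y ⬝ᵥ y) + n ⬝ᵥ y

/-- The complement of the Dirac string, the ray opposite to `n`; it is empty for `n = 0`. -/
def diracDomain (n : ι → ℝ) : Set (ι → ℝ) :=
  {y | 0 < diracDenom n y}

lemma continuous_diracDenom (n : ι → ℝ) : Continuous (diracDenom n) := by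
  unfold diracDenom
  fun_prop

lemma isOpen_diracDomain (n : ι → ℝ) : IsOpen (diracDomain n) :=
  isOpen_lt continuous_const (continuous_diracDenom n)

lemma self_mem_diracDomain (hn : 0 < n ⬝ᵥ n) : n ∈ diracDomain n := by
  change 0 < √(n ⬝ᵥ n) * √(n ⬝ᵥ n) + n ⬝ᵥ n
  positivity

lemma dotProduct_self_pos_of_mem_diracDomain (hy : y ∈ diracDomain n) :
    0 < y ⬝ᵥ y := by
  refine (dotProduct_self_star_nonneg y).lt_of_ne' fun hzero => ?_
  obtain rfl : y = 0 := dotProduct_self_eq_zero.1 hzero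
  simp [diracDomain, diracDenom] at hy

lemma contDiffOn_inv_sqrt_mul_diracDenom {k : WithTop ℕ∞} :
    ContDiffOn ℝ k (fun y => (√(y ⬝ᵥ y) * diracDenom n y)⁻¹) (diracDomain n) := by
  have hsqrt : ContDiffOn ℝ k (fun y => √(y ⬝ᵥ y)) (diracDomain n) :=
    contDiff_dotProduct_self.contDiffOn.sqrt
      fun y hy => (dotProduct_self_pos_of_mem_diracDomain hy).ne'
  have hn : ContDiffOn ℝ k (fun y => n ⬝ᵥ y) (diracDomain n) :=
    contDiffOn_dotProduct contDiffOn_const contDiffOn_id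
  refine (hsqrt.mul ((contDiffOn_const.mul hsqrt).add hn)).inv fun y hy => ?_
  exact (mul_pos (Real.sqrt_pos.2 (dotProduct_self_pos_of_mem_diracDomain hy)) hy).ne'

lemma differentiableAt_inv_sqrt_mul_diracDenom (hy : y ∈ diracDomain n) :
    DifferentiableAt ℝ (fun x => (√(x ⬝ᵥ x) * diracDenom n x)⁻¹) y :=
  (contDiffOn_inv_sqrt_mul_diracDenom.contDiffAt
    ((isOpen_diracDomain n).mem_nhds hy)).differentiableAt one_ne_zero

lemma fderiv_inv_sqrt_mul_diracDenom (hy : y ∈ diracDomain n) (w : ι → ℝ) :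
    fderiv ℝ (fun x => (√(x ⬝ᵥ x) * diracDenom n x)⁻¹) y w
      = -((diracDenom n y / √(y ⬝ᵥ y) + √(n ⬝ᵥ n)) * (y ⬝ᵥ w) + √(y ⬝ᵥ y) * (n ⬝ᵥ w))
          / (√(y ⬝ᵥ y) * diracDenom n y) ^ 2 := by
  have hpos : 0 < y ⬝ᵥ y := dotProduct_self_pos_of_mem_diracDomain hy
  have hsqrt : 0 < √(y ⬝ᵥ y) := Real.sqrt_pos.2 hpos
  have hline := hasDerivAt_add_smul y w
  have hy0 : y + (0 : ℝ) • w = y := by rw [zero_smul, add_zero]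
  have hnorm := hasDerivAt_sqrt_dotProduct_self hline (by rwa [hy0])
  have hdenom := (hnorm.const_mul √(n ⬝ᵥ n)).add
    (hasDerivAt_dotProduct (hasDerivAt_const 0 n) hline)
  have hinv := (hnorm.mul hdenom).inv (by
    simp only [Pi.mul_apply, Pi.add_apply, hy0]
    exact (mul_pos hsqrt hy).ne')
  have hfderiv := (differentiableAt_inv_sqrt_mul_diracDenom hy).hasFDerivAt.hasLineDerivAt w
  refine hfderiv.unique (hinv.congr_deriv ?_)
  simp only [Pi.mul_apply, Pi.add_apply, hy0, zero_dotProduct, add_zero, diracDenom]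
  field_simp
  ring

/-- A vector potential, smooth off the Dirac string, of the field `y / |y|³` of a magnetic
monopole. -/
def diracPotential (n y : Fin 3 → ℝ) : Fin 3 → ℝ :=
  (√(y ⬝ᵥ y) * diracDenom n y)⁻¹ • n ⨯₃ y

lemma contDiffOn_diracPotential {n : Fin 3 → ℝ} {k : WithTop ℕ∞} :
    ContDiffOn ℝ k (diracPotential n) (diracDomain n) :=
  contDiffOn_inv_sqrt_mul_diracDenom.smul
    (crossProduct n).toContinuousLinearMap.contDiff.contDiffOn

lemma curlForm_diracPotential {n y : Fin 3 → ℝ} (hy : y ∈ diracDomain n) (w u : Fin 3 → ℝ) :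
    curlForm (diracPotential n) y w u = (y ⬝ᵥ w ⨯₃ u) / √(y ⬝ᵥ y) ^ 3 := by
  have hcurl := curlForm_smul (differentiableAt_inv_sqrt_mul_diracDenom hy)
    (crossProduct n).toContinuousLinearMap.differentiableAt w u
  simp only [LinearMap.coe_toContinuousLinearMap', curlForm_crossProduct,
    fderiv_inv_sqrt_mul_diracDenom hy] at hcurl
  have hpos : 0 < y ⬝ᵥ y := dotProduct_self_pos_of_mem_diracDomain hy
  have lagrange (z : Fin 3 → ℝ) : (z ⬝ᵥ w) * (n ⨯₃ y ⬝ᵥ u) - (z ⬝ᵥ u) * (n ⨯₃ y ⬝ᵥ w)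
      = (z ⬝ᵥ y) * (n ⬝ᵥ w ⨯₃ u) - (z ⬝ᵥ n) * (y ⬝ᵥ w ⨯₃ u) := by
    rw [← cross_dot_cross, cross_cross_eq_smul_sub_smul', sub_dotProduct, smul_dotProduct,
      smul_dotProduct, smul_eq_mul, smul_eq_mul, dotProduct_comm n z]
  have hy_terms := lagrange y
  have hn_terms := lagrange n
  rw [← Real.sq_sqrt hpos.le, dotProduct_comm y n] at hy_terms
  rw [← Real.sq_sqrt (show 0 ≤ n ⬝ᵥ n from dotProduct_self_star_nonneg n)] at hn_terms
  have hdot : n ⬝ᵥ y = diracDenom n y - √(n ⬝ᵥ n) * √(y ⬝ᵥ y) := (add_sub_cancel_left _ _).symm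
  have hnorm : √(y ⬝ᵥ y) ≠ 0 := (Real.sqrt_pos.2 hpos).ne'
  have hdenom : diracDenom n y ≠ 0 := ne_of_gt hy
  refine hcurl.trans ?_
  generalize √(y ⬝ᵥ y) = r, √(n ⬝ᵥ n) = N, diracDenom n y = k at *
  calc _ = 2 * (r * k)⁻¹ * (n ⬝ᵥ w ⨯₃ u)
        - ((k / r + N) * ((y ⬝ᵥ w) * (n ⨯₃ y ⬝ᵥ u) - (y ⬝ᵥ u) * (n ⨯₃ y ⬝ᵥ w))
          + r * ((n ⬝ᵥ w) * (n ⨯₃ y ⬝ᵥ u) - (n ⬝ᵥ u) * (n ⨯₃ y ⬝ᵥ w))) / (r * k) ^ 2 := by ring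
    _ = (y ⬝ᵥ w ⨯₃ u) / r ^ 3 := by
      rw [hy_terms, hn_terms, hdot]
      field_simp
      ring

end DiracMonopole

section SpinningParticle

variable {s0 m : ℝ} {s v v₀ : Fin 3 → ℝ}

/-- The linear map `v ↦ s⁰ v + 𝐬 × v`, as a matrix. -/
def spinMatrix (s0 : ℝ) (s : Fin 3 → ℝ) : Matrix (Fin 3) (Fin 3) ℝ :=
  LinearMap.toMatrix' (s0 • LinearMap.id + crossProduct s)

/-- The vector part of the quaternion product of `1 + v` with the conjugate `s⁰ - 𝐬` of the
spin. -/
def relSpin (s0 : ℝ) (s v : Fin 3 → ℝ) : Fin 3 → ℝ :=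
  spinMatrix s0 s *ᵥ v - s

lemma spinMatrix_mulVec (s0 : ℝ) (s w : Fin 3 → ℝ) :
    spinMatrix s0 s *ᵥ w = s0 • w + s ⨯₃ w :=
  LinearMap.toMatrix'_mulVec _ w

lemma relSpin_dotProduct_self (s0 : ℝ) (s v : Fin 3 → ℝ) :
    relSpin s0 s v ⬝ᵥ relSpin s0 s v = sDelta s0 s v := by
  simp only [relSpin, spinMatrix_mulVec, sDelta, cross_apply, vec3_dotProduct, Pi.sub_apply,
    Pi.add_apply, Pi.smul_apply, smul_eq_mul, cons_val]
  ring

lemma relSpin_dotProduct_cross (s0 : ℝ) (s v w u : Fin 3 → ℝ) :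
    relSpin s0 s v ⬝ᵥ (spinMatrix s0 s *ᵥ w) ⨯₃ (spinMatrix s0 s *ᵥ u)
      = (s0 ^ 2 + s ⬝ᵥ s) * (w ⨯₃ (s - s0 • v) ⬝ᵥ u) := by
  simp only [relSpin, spinMatrix_mulVec, cross_apply, vec3_dotProduct, Pi.sub_apply,
    Pi.add_apply, Pi.smul_apply, smul_eq_mul, cons_val]
  ring

lemma continuous_relSpin (s0 : ℝ) (s : Fin 3 → ℝ) : Continuous (relSpin s0 s) :=
  (continuous_const.matrix_mulVec continuous_id).sub continuous_const

lemma contDiff_relSpin {k : WithTop ℕ∞} : ContDiff ℝ k (relSpin s0 s) :=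
  (spinMatrix s0 s).mulVecLin.toContinuousLinearMap.contDiff.sub contDiff_const

lemma one_add_dotProduct_self_pos {ι : Type*} [Fintype ι] (v : ι → ℝ) : 0 < 1 + v ⬝ᵥ v :=
  add_pos_of_pos_of_nonneg one_pos (dotProduct_self_star_nonneg v)

lemma sq_add_dotProduct_self_pos_of_sDelta_pos (hv : 0 < sDelta s0 s v) :
    0 < s0 ^ 2 + s ⬝ᵥ s := by
  refine pos_of_mul_pos_right ?_ (one_add_dotProduct_self_pos v).le
  exact hv.trans_le (sub_le_self _ (sq_nonneg _))

/-- The velocities whose relative spin avoids the Dirac string opposite to that of `v₀`. -/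
def spinDomain (s0 : ℝ) (s v₀ : Fin 3 → ℝ) : Set (Fin 3 → ℝ) :=
  relSpin s0 s ⁻¹' diracDomain (relSpin s0 s v₀)

lemma isOpen_spinDomain (s0 : ℝ) (s v₀ : Fin 3 → ℝ) : IsOpen (spinDomain s0 s v₀) :=
  (isOpen_diracDomain _).preimage (continuous_relSpin s0 s)

lemma self_mem_spinDomain (hv₀ : 0 < sDelta s0 s v₀) : v₀ ∈ spinDomain s0 s v₀ :=
  self_mem_diracDomain (by rwa [relSpin_dotProduct_self])

lemma sDelta_pos_of_mem_spinDomain (hv : v ∈ spinDomain s0 s v₀) : 0 < sDelta s0 s v := by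
  rw [← relSpin_dotProduct_self]
  exact dotProduct_self_pos_of_mem_diracDomain hv

/-- The coefficient of the acceleration in the Lagrange function: the pullback of the monopole
potential along `relSpin`, divided by `s⁰² + 𝐬·𝐬`. -/
def spinPotential (s0 : ℝ) (s v₀ v : Fin 3 → ℝ) : Fin 3 → ℝ :=
  (s0 ^ 2 + s ⬝ᵥ s)⁻¹ •
    (spinMatrix s0 s)ᵀ *ᵥ diracPotential (relSpin s0 s v₀) (relSpin s0 s v)

lemma contDiffOn_transpose_mulVec_diracPotential {k : WithTop ℕ∞} :
    ContDiffOn ℝ k (fun v => (spinMatrix s0 s)ᵀ *ᵥ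
      diracPotential (relSpin s0 s v₀) (relSpin s0 s v)) (spinDomain s0 s v₀) :=
  (spinMatrix s0 s)ᵀ.mulVecLin.toContinuousLinearMap.contDiff.comp_contDiffOn
    (contDiffOn_diracPotential.comp contDiff_relSpin.contDiffOn (Set.mapsTo_preimage _ _))

lemma contDiffOn_spinPotential {k : WithTop ℕ∞} :
    ContDiffOn ℝ k (spinPotential s0 s v₀) (spinDomain s0 s v₀) :=
  contDiffOn_transpose_mulVec_diracPotential.const_smul _

lemma curlForm_spinPotential (hv : v ∈ spinDomain s0 s v₀) (w u : Fin 3 → ℝ) :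
    curlForm (spinPotential s0 s v₀) v w u
      = (sDelta s0 s v ^ ((3 : ℝ) / 2))⁻¹ * (w ⨯₃ (s - s0 • v) ⬝ᵥ u) := by
  have hΔ : 0 < sDelta s0 s v := sDelta_pos_of_mem_spinDomain hv
  have hσ : s0 ^ 2 + s ⬝ᵥ s ≠ 0 := (sq_add_dotProduct_self_pos_of_sDelta_pos hΔ).ne'
  have hpow : sDelta s0 s v ^ ((3 : ℝ) / 2) = √(sDelta s0 s v) ^ 3 := by
    rw [Real.rpow_div_two_eq_sqrt _ hΔ.le, Real.rpow_ofNat]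
  have hdirac : DifferentiableAt ℝ (diracPotential (relSpin s0 s v₀)) (relSpin s0 s v) :=
    (contDiffOn_diracPotential.contDiffAt
      ((isOpen_diracDomain _).mem_nhds hv)).differentiableAt one_ne_zero
  have hpullback : DifferentiableAt ℝ (fun x => (spinMatrix s0 s)ᵀ *ᵥ
      diracPotential (relSpin s0 s v₀) (relSpin s0 s x)) v :=
    (contDiffOn_transpose_mulVec_diracPotential.contDiffAt
      ((isOpen_spinDomain s0 s v₀).mem_nhds hv)).differentiableAt one_ne_zero
  calc curlForm (spinPotential s0 s v₀) v w u
      = (s0 ^ 2 + s ⬝ᵥ s)⁻¹ * curlForm (fun x => (spinMatrix s0 s)ᵀ *ᵥ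
          diracPotential (relSpin s0 s v₀) (relSpin s0 s x)) v w u :=
        curlForm_const_smul _ hpullback w u
    _ = (s0 ^ 2 + s ⬝ᵥ s)⁻¹ * curlForm (diracPotential (relSpin s0 s v₀)) (relSpin s0 s v)
          (spinMatrix s0 s *ᵥ w) (spinMatrix s0 s *ᵥ u) := by
        simp only [relSpin, sub_eq_add_neg] at hdirac ⊢
        rw [curlForm_pullback _ _ hdirac]
    _ = (sDelta s0 s v ^ ((3 : ℝ) / 2))⁻¹ * (w ⨯₃ (s - s0 • v) ⬝ᵥ u) := by
        rw [curlForm_diracPotential hv, relSpin_dotProduct_cross, relSpin_dotProduct_self, hpow,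
          mul_div_assoc, inv_mul_cancel_left₀ hσ, div_eq_inv_mul]

/-- The free relativistic Lagrange function, with the factor `m / (s⁰² + 𝐬·𝐬)^(3/2)` of (35)
as its mass. -/
def spinKinetic (s0 : ℝ) (s : Fin 3 → ℝ) (m : ℝ) (v : Fin 3 → ℝ) : ℝ :=
  -(m / (s0 ^ 2 + s ⬝ᵥ s) ^ ((3 : ℝ) / 2)) * √(1 + v ⬝ᵥ v)

lemma contDiff_spinKinetic {k : WithTop ℕ∞} : ContDiff ℝ k (spinKinetic s0 s m) :=
  contDiff_const.mul
    ((contDiff_const.add contDiff_dotProduct_self).sqrt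
      fun v => (one_add_dotProduct_self_pos v).ne')

lemma fderiv_spinKinetic (v u : Fin 3 → ℝ) :
    fderiv ℝ (spinKinetic s0 s m) v u
      = -(m / (s0 ^ 2 + s ⬝ᵥ s) ^ ((3 : ℝ) / 2) * ((1 + v ⬝ᵥ v) ^ ((1 : ℝ) / 2))⁻¹)
          * (v ⬝ᵥ u) := by
  have hline := ((hasDerivAt_dotProduct_self (hasDerivAt_add_smul v u)).const_add 1).sqrt
    (one_add_dotProduct_self_pos _).ne'
  have hdiff := (contDiff_spinKinetic (s0 := s0) (s := s) (m := m)).differentiable one_ne_zero v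
  refine (hdiff.hasFDerivAt.hasLineDerivAt u).unique ((hline.const_mul _).congr_deriv ?_)
  rw [zero_smul, add_zero, mul_div_mul_left _ _ two_ne_zero, ← Real.sqrt_eq_rpow]
  ring

/-- The quantity whose time derivative is the expression (35), as a function of the velocity `v`
and the acceleration `w`. -/
def spinMomentum (s0 : ℝ) (s : Fin 3 → ℝ) (m : ℝ) (v w : Fin 3 → ℝ) : Fin 3 → ℝ :=
  (sDelta s0 s v ^ ((3 : ℝ) / 2))⁻¹ • w ⨯₃ (s - s0 • v)
    + (m / (s0 ^ 2 + s ⬝ᵥ s) ^ ((3 : ℝ) / 2)) • ((1 + v ⬝ᵥ v) ^ ((1 : ℝ) / 2))⁻¹ • v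

lemma hasDerivAt_sDelta {v : ℝ → Fin 3 → ℝ} {v' : Fin 3 → ℝ} {t : ℝ} (hv : HasDerivAt v v' t) :
    HasDerivAt (fun τ => sDelta s0 s (v τ))
      (2 * ((s0 ^ 2 + s ⬝ᵥ s) * (v' ⬝ᵥ v t) - (s0 + s ⬝ᵥ v t) * (s ⬝ᵥ v'))) t := by
  have hsv := (hasDerivAt_dotProduct (hasDerivAt_const t s) hv).const_add s0
  refine ((((hasDerivAt_dotProduct_self hv).const_add 1).mul_const _).sub
    (hsv.pow 2)).congr_deriv ?_
  rw [zero_dotProduct, dotProduct_comm v']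
  ring

lemma hasDerivAt_spinMomentum {v w : ℝ → Fin 3 → ℝ} {w' : Fin 3 → ℝ} {t : ℝ}
    (hv : HasDerivAt v (w t) t) (hw : HasDerivAt w w' t) (hΔ : 0 < sDelta s0 s (v t)) :
    HasDerivAt (fun τ => spinMomentum s0 s m (v τ) (w τ)) (spinE s0 s m (v t) (w t) w') t := by
  have hspin := (hasDerivAt_inv_rpow (hasDerivAt_sDelta hv) hΔ (3 / 2)).smul
    (hasDerivAt_crossProduct hw ((hv.const_smul s0).const_sub s))
  have hv_pos := one_add_dotProduct_self_pos (v t)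
  have hkinetic := ((hasDerivAt_inv_rpow ((hasDerivAt_dotProduct_self hv).const_add 1)
    hv_pos (1 / 2)).smul hv).const_smul (m / (s0 ^ 2 + s ⬝ᵥ s) ^ ((3 : ℝ) / 2))
  have hthree_halves : (1 / 2 : ℝ) + 1 = 3 / 2 := by norm_num
  have hfive_halves : (3 / 2 : ℝ) + 1 = 5 / 2 := by norm_num
  have hroot : ((1 + v t ⬝ᵥ v t) ^ (1 / 2 : ℝ))⁻¹
      = (1 + v t ⬝ᵥ v t) / (1 + v t ⬝ᵥ v t) ^ (3 / 2 : ℝ) := by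
    rw [← hthree_halves, Real.rpow_add_one hv_pos.ne', div_mul_cancel_right₀ hv_pos.ne']
  refine (hspin.add hkinetic).congr_deriv ?_
  rw [hthree_halves, hfive_halves, hroot, spinE, dotProduct_comm (w t) (v t)]
  simp only [map_neg, map_smul, cross_self, smul_zero, neg_zero, zero_add, Pi.smul_apply]
  module

/-- The Lagrange function of the spinning particle around the velocity `v₀`. -/
def spinLagrangian (s0 : ℝ) (s : Fin 3 → ℝ) (m : ℝ) (v₀ : Fin 3 → ℝ) :
    ℝ → (Fin 3 → ℝ) → (Fin 3 → ℝ) → (Fin 3 → ℝ) → ℝ :=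
  fun _ _ v w => spinPotential s0 s v₀ v ⬝ᵥ w + spinKinetic s0 s m v

lemma contDiffOn_spinLagrangian {k : WithTop ℕ∞} :
    ContDiffOn ℝ k (fun p : ℝ × (Fin 3 → ℝ) × (Fin 3 → ℝ) × (Fin 3 → ℝ) =>
      spinLagrangian s0 s m v₀ p.1 p.2.1 p.2.2.1 p.2.2.2) {p | p.2.2.1 ∈ spinDomain s0 s v₀} := by
  have hvel : ContDiff ℝ k fun p : ℝ × (Fin 3 → ℝ) × (Fin 3 → ℝ) × (Fin 3 → ℝ) => p.2.2.1 := by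
    fun_prop
  have hacc : ContDiff ℝ k fun p : ℝ × (Fin 3 → ℝ) × (Fin 3 → ℝ) × (Fin 3 → ℝ) => p.2.2.2 := by
    fun_prop
  have hpotential : ContDiffOn ℝ k
      (fun p : ℝ × (Fin 3 → ℝ) × (Fin 3 → ℝ) × (Fin 3 → ℝ) => spinPotential s0 s v₀ p.2.2.1)
      {p | p.2.2.1 ∈ spinDomain s0 s v₀} :=
    contDiffOn_spinPotential.comp hvel.contDiffOn fun _ hp => hp
  exact (contDiffOn_dotProduct hpotential hacc.contDiffOn).add
    (contDiff_spinKinetic.fun_comp hvel).contDiffOn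

lemma curlForm_spinPotential_sub_fderiv_spinKinetic (hv : v ∈ spinDomain s0 s v₀)
    (w : Fin 3 → ℝ) (a : Fin 3) :
    curlForm (spinPotential s0 s v₀) v w (Pi.single a 1)
      - fderiv ℝ (spinKinetic s0 s m) v (Pi.single a 1) = spinMomentum s0 s m v w a := by
  rw [curlForm_spinPotential hv, fderiv_spinKinetic]
  simp only [dotProduct_single_one, spinMomentum, Pi.add_apply, Pi.smul_apply, smul_eq_mul]
  ring

lemma eulerPoisson_spinLagrangian {I : Set ℝ} (hI : IsOpen I) {c : ℝ → Fin 3 → ℝ}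
    (hc : ContDiffOn ℝ 3 c I) (hcV : Set.MapsTo (deriv c) I (spinDomain s0 s v₀)) {t : ℝ}
    (ht : t ∈ I) (a : Fin 3) :
    eulerPoisson (spinLagrangian s0 s m v₀) c t a
      = spinE s0 s m (deriv c t) (deriv (deriv c) t) (deriv (deriv (deriv c)) t) a := by
  have hc' : ContDiffOn ℝ 2 (deriv c) I := hc.deriv_of_isOpen hI (by norm_num)
  have hc'' : ContDiffOn ℝ 1 (deriv (deriv c)) I := hc'.deriv_of_isOpen hI (by norm_num)
  have hv := ((hc'.contDiffAt (hI.mem_nhds ht)).differentiableAt two_ne_zero).hasDerivAt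
  have hw := ((hc''.contDiffAt (hI.mem_nhds ht)).differentiableAt one_ne_zero).hasDerivAt
  have hmomentum := (hI.eventually_mem ht).mono fun τ hτ =>
    curlForm_spinPotential_sub_fderiv_spinKinetic (m := m) (hcV hτ) (deriv (deriv c) τ) a
  calc eulerPoisson (spinLagrangian s0 s m v₀) c t a
      = deriv (fun τ => curlForm (spinPotential s0 s v₀) (deriv c τ) (deriv (deriv c) τ)
          (Pi.single a 1) - fderiv ℝ (spinKinetic s0 s m) (deriv c τ) (Pi.single a 1)) t :=
        eulerPoisson_affine (isOpen_spinDomain s0 s v₀) contDiffOn_spinPotential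
          contDiff_spinKinetic.contDiffOn hI hc hcV ht a
    _ = deriv (fun τ => spinMomentum s0 s m (deriv c τ) (deriv (deriv c) τ) a) t :=
        Filter.EventuallyEq.deriv_eq hmomentum
    _ = spinE s0 s m (deriv c t) (deriv (deriv c) t) (deriv (deriv (deriv c)) t) a :=
        (hasDerivAt_pi.1 (hasDerivAt_spinMomentum hv hw
          (sDelta_pos_of_mem_spinDomain (hcV ht))) a).deriv

end SpinningParticle

/-- The third-order equation of motion (35) of the semi-classical
spinning particle is locally variational: around every point of the domain
`{Δ(v) > 0}` there is a second-order Lagrange function `L(t,x,v,v′)` whose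
Euler–Poisson expressions reproduce (35). -/
theorem spinning_particle_locally_variational
    (s0 : ℝ) (s : Fin 3 → ℝ) (hs : (s0, s) ≠ 0) (m : ℝ) :
    ∀ t₀ : ℝ, ∀ x₀ v₀ v'₀ : Fin 3 → ℝ, 0 < sDelta s0 s v₀ →
    ∃ U : Set (ℝ × (Fin 3 → ℝ) × (Fin 3 → ℝ) × (Fin 3 → ℝ)),
      IsOpen U ∧ (t₀, x₀, v₀, v'₀) ∈ U ∧ (∀ p ∈ U, 0 < sDelta s0 s p.2.2.1) ∧
      ∃ L : ℝ → (Fin 3 → ℝ) → (Fin 3 → ℝ) → (Fin 3 → ℝ) → ℝ,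
        ContDiffOn ℝ (⊤ : ℕ∞)
          (fun p : ℝ × (Fin 3 → ℝ) × (Fin 3 → ℝ) × (Fin 3 → ℝ) =>
            L p.1 p.2.1 p.2.2.1 p.2.2.2) U ∧
        ∀ I : Set ℝ, IsOpen I → ∀ c : ℝ → (Fin 3 → ℝ), ContDiffOn ℝ (⊤ : ℕ∞) c I →
          (∀ t ∈ I, (t, c t, deriv c t, deriv (deriv c) t) ∈ U) →
          ∀ t ∈ I, ∀ a : Fin 3,
            eulerPoisson L c t a
              = spinE s0 s m (deriv c t) (deriv (deriv c) t)
                  (deriv (deriv (deriv c)) t) a := by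
  intro t₀ x₀ v₀ v'₀ hv₀
  refine ⟨{p | p.2.2.1 ∈ spinDomain s0 s v₀}, ?_, self_mem_spinDomain hv₀,
    fun p hp => sDelta_pos_of_mem_spinDomain hp, spinLagrangian s0 s m v₀,
    contDiffOn_spinLagrangian, fun I hI c hc hcU t ht a => ?_⟩
  · exact (isOpen_spinDomain s0 s v₀).preimage (by fun_prop)
  · exact eulerPoisson_spinLagrangian hI (contDiffOn_infty.1 hc 3) hcU ht a

end
end

section
/- Pseudo-orthogonal covariance of the Euler–Poisson equations (36): let 𝓔 be as in the context. For every Λ ∈ GL(4,ℝ) with Λᵀ η Λ = η (η regarded as the matrix diag(1,−1,−1,−1)) and det Λ = 1, and for all (s, u, u̇, ü) in the domain, one has 𝓔_ρ(Λs; Λu, Λu̇, Λü) = Σ_σ (Λ⁻¹)^σ{}_ρ · 𝓔_σ(s; u, u̇, ü). Consequently, for every such Λ a smooth curve γ : I → ℝ⁴ satisfies 𝓔_ρ(s; γ̇, γ̈, γ⃛) = 0 on I if and only if the transformed curve Λ∘γ satisfies 𝓔_ρ(Λs; (Λγ)˙, (Λγ)¨, (Λγ)⃛) = 0 on I: the equations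 (36) are invariant under the special pseudo-orthogonal group acting simultaneously on the world-line and on the spin four-vector s. -/
noncomputable section

/-- The pseudo-Euclidean bilinear form `η(a,b) = a⁰b⁰ − a¹b¹ − a²b² − a³b³` on `ℝ⁴`. -/
def etaB (a b : Fin 4 → ℝ) : ℝ :=
  a 0 * b 0 - a 1 * b 1 - a 2 * b 2 - a 3 * b 3

/-- `‖a‖ = |η(a,a)|^{1/2}`. -/
def etaNorm (a : Fin 4 → ℝ) : ℝ :=
  Real.sqrt |etaB a a|

/-- `(a∧b)·(c∧d) = η(a,c)η(b,d) − η(a,d)η(b,c)`. -/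
def wedgeDot (a b c d : Fin 4 → ℝ) : ℝ :=
  etaB a c * etaB b d - etaB a d * etaB b c

/-- `‖a∧b‖ = |η(a,a)η(b,b) − η(a,b)²|^{1/2}`. -/
def wedgeNorm (a b : Fin 4 → ℝ) : ℝ :=
  Real.sqrt |etaB a a * etaB b b - etaB a b ^ 2|

/-- The Levi-Civita permutation symbol `e_{ρμνσ}` on four indices, with `e_{0123} = 1`,
realized as the determinant of the matrix of corresponding standard basis rows. -/
def leviCivita (ρ μ ν σ : Fin 4) : ℝ :=
  Matrix.det (Matrix.of fun i j => if ![ρ, μ, ν, σ] i = j then (1 : ℝ) else 0)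

/-- `[∗(a∧b∧c)]_ρ = Σ_{μ,ν,σ} e_{ρμνσ} a^μ b^ν c^σ`. -/
def starWedge (a b c : Fin 4 → ℝ) (ρ : Fin 4) : ℝ :=
  ∑ μ, ∑ ν, ∑ σ, leviCivita ρ μ ν σ * a μ * b ν * c σ

/-- Index lowering by `η` : `(a♭)_ρ`. -/
def lowerIdx (a : Fin 4 → ℝ) (ρ : Fin 4) : ℝ :=
  if ρ = 0 then a 0 else -(a ρ)

/-- The covector-valued expression (36) of the relativistic spinning particle:
`𝓔_ρ(s; u, u̇, ü) = [∗(ü∧u∧s)]_ρ/‖s∧u‖³ − 3 [∗(u̇∧u∧s)]_ρ ((u̇∧s)·(u∧s))/‖s∧u‖⁵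
 + (m/‖s‖³)((u̇♭)_ρ/‖u‖ − η(u̇,u)(u♭)_ρ/‖u‖³)`. -/
def spinE4 (m : ℝ) (s u u' u'' : Fin 4 → ℝ) (ρ : Fin 4) : ℝ :=
  starWedge u'' u s ρ / wedgeNorm s u ^ 3
    - 3 * starWedge u' u s ρ * wedgeDot u' s u s / wedgeNorm s u ^ 5
    + m / etaNorm s ^ 3 *
        (lowerIdx u' ρ / etaNorm u - etaB u' u * lowerIdx u ρ / etaNorm u ^ 3)

/-- The matrix `diag(1,−1,−1,−1)` of the bilinear form `η`. -/
def etaMatrix : Matrix (Fin 4) (Fin 4) ℝ :=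
  Matrix.diagonal ![1, -1, -1, -1]

/-!
The pairing of `∗(a∧b∧c)` with a vector `v` is the determinant of the rows `v, a, b, c`, and
applying `Λ` to all four vectors multiplies it by `det Λ`. Hence `∗` is covariant up to the factor
`det Λ`, whereas `♭` is covariant because `Λ` preserves `η`. The scalar coefficients of (36)
depend on `η` only and are invariant. The factor `det Λ = ±1` of the first two terms is absorbed by
replacing `m` with `det Λ * m`, which makes (36) covariant under the whole pseudo-orthogonal group.
Since `Λ` is a linear isomorphism, it commutes with differentiation of curves.
-/

section

open Matrix

section Determinant

lemma sum_fun_fin_succ {α M : Type*} [Fintype α] [AddCommMonoid M] {n : ℕ}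
    (f : (Fin (n + 1) → α) → M) :
    ∑ r, f r = ∑ a, ∑ r : Fin n → α, f (vecCons a r) := by
  rw [← (Fin.consEquiv fun _ => α).sum_comp, Fintype.sum_prod_type]
  rfl

variable {n R : Type*} [Fintype n] [DecidableEq n] [CommRing R]

lemma det_eq_sum_prod_mul_det_one_submatrix (A : Matrix n n R) :
    A.det = ∑ r : n → n, (∏ i, A i (r i)) * ((1 : Matrix n n R).submatrix r id).det := by
  have hrow : A = fun i => ∑ j, A i j • (1 : Matrix n n R) j := by
    ext i k
    simp [one_apply]
  calc A.det = detRowAlternating.toMultilinearMap fun i => ∑ j, A i j • (1 : Matrix n n R) j :=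
        congrArg det hrow
    _ = _ := by
        simp only [MultilinearMap.map_sum, MultilinearMap.map_smul_univ, smul_eq_mul]
        rfl

lemma det_of_mulVec (A : Matrix n n R) (v : n → n → R) :
    (of fun i => A *ᵥ v i).det = A.det * (of v).det := by
  have hmul : (of fun i => A *ᵥ v i) = of v * Aᵀ := by
    ext i j
    rw [mul_apply_eq_vecMul, vecMul_transpose]
    rfl
  rw [hmul, det_mul, det_transpose, mul_comm]

end Determinant

section PreservedForm

variable {n R : Type*} [Fintype n]

lemma dotProduct_mulVec_of_transpose_mul_mul_eq [NonUnitalCommSemiring R] {J A : Matrix n n R}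
    (hA : Aᵀ * J * A = J) (v w : n → R) :
    (A *ᵥ v) ⬝ᵥ (J *ᵥ (A *ᵥ w)) = v ⬝ᵥ (J *ᵥ w) := by
  rw [← vecMul_transpose, ← dotProduct_mulVec, mulVec_mulVec, mulVec_mulVec, hA]

lemma mulVec_mulVec_vecMul_of_transpose_mul_mul_eq [NonUnitalCommSemiring R] {J A : Matrix n n R}
    (hA : Aᵀ * J * A = J) (v : n → R) :
    (J *ᵥ (A *ᵥ v)) ᵥ* A = J *ᵥ v := by
  rw [← mulVec_transpose, mulVec_mulVec, mulVec_mulVec, hA]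

lemma isUnit_det_of_transpose_mul_mul_eq [DecidableEq n] [CommRing R] {J A : Matrix n n R}
    (hJ : IsUnit J.det) (hA : Aᵀ * J * A = J) :
    IsUnit A.det := by
  refine isUnit_of_dvd_unit (Dvd.intro_left (Aᵀ * J).det ?_) hJ
  rw [← det_mul, hA]

end PreservedForm

section Derivative

variable {𝕜 : Type*} [NontriviallyNormedField 𝕜]

lemma deriv_continuousLinearEquiv_comp {E F : Type*} [NormedAddCommGroup E] [NormedSpace 𝕜 E]
    [NormedAddCommGroup F] [NormedSpace 𝕜 F] (e : E ≃L[𝕜] F) (γ : 𝕜 → E) :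
    deriv (e ∘ γ) = e ∘ deriv γ := by
  funext τ
  rw [← fderiv_apply_one_eq_deriv, e.comp_fderiv]
  rfl

lemma deriv_mulVec_of_isUnit_det [CompleteSpace 𝕜] {n : Type*} [Fintype n] [DecidableEq n]
    {A : Matrix n n 𝕜} (hA : IsUnit A.det) (γ : 𝕜 → n → 𝕜) :
    deriv (fun t => A *ᵥ γ t) = fun t => A *ᵥ deriv γ t :=
  deriv_continuousLinearEquiv_comp
    (A.toLinearEquiv' (A.invertibleOfIsUnitDet hA)).toContinuousLinearEquiv γ

end Derivative

lemma etaB_eq_dotProduct (a b : Fin 4 → ℝ) : etaB a b = a ⬝ᵥ (etaMatrix *ᵥ b) := by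
  simp only [etaB, etaMatrix, dotProduct, mulVec_diagonal, Fin.sum_univ_four, cons_val]
  ring

lemma lowerIdx_eq_mulVec (a : Fin 4 → ℝ) : lowerIdx a = etaMatrix *ᵥ a := by
  ext ρ
  fin_cases ρ <;> simp [lowerIdx, etaMatrix, mulVec_diagonal]

lemma isUnit_det_etaMatrix : IsUnit etaMatrix.det := by
  simp [etaMatrix, det_diagonal, Fin.prod_univ_four]

lemma dotProduct_starWedge (v a b c : Fin 4 → ℝ) :
    v ⬝ᵥ starWedge a b c = (of ![v, a, b, c]).det := by
  have hsymbol (ρ μ ν σ : Fin 4) :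
      leviCivita ρ μ ν σ = ((1 : Matrix (Fin 4) (Fin 4) ℝ).submatrix ![ρ, μ, ν, σ] id).det := rfl
  rw [det_eq_sum_prod_mul_det_one_submatrix]
  simp only [sum_fun_fin_succ, Fintype.sum_subsingleton _ (![] : Fin 0 → Fin 4), dotProduct,
    starWedge, hsymbol, Finset.mul_sum, Fin.prod_univ_four]
  refine Fintype.sum_congr _ _ fun ρ => Fintype.sum_congr _ _ fun μ =>
    Fintype.sum_congr _ _ fun ν => Fintype.sum_congr _ _ fun σ => ?_
  simp only [of_apply, cons_val]
  ring

lemma starWedge_mulVec_vecMul (Λ : Matrix (Fin 4) (Fin 4) ℝ) (a b c : Fin 4 → ℝ) :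
    starWedge (Λ *ᵥ a) (Λ *ᵥ b) (Λ *ᵥ c) ᵥ* Λ = Λ.det • starWedge a b c := by
  refine dotProduct_eq _ _ fun v => ?_
  have hrows : ![Λ *ᵥ v, Λ *ᵥ a, Λ *ᵥ b, Λ *ᵥ c] = fun i => Λ *ᵥ ![v, a, b, c] i := by
    ext i
    fin_cases i <;> rfl
  calc (starWedge (Λ *ᵥ a) (Λ *ᵥ b) (Λ *ᵥ c) ᵥ* Λ) ⬝ᵥ v
      = (Λ *ᵥ v) ⬝ᵥ starWedge (Λ *ᵥ a) (Λ *ᵥ b) (Λ *ᵥ c) := by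
        rw [← dotProduct_mulVec, dotProduct_comm]
    _ = Λ.det * (of ![v, a, b, c]).det := by rw [dotProduct_starWedge, hrows, det_of_mulVec]
    _ = (Λ.det • starWedge a b c) ⬝ᵥ v := by
        rw [← dotProduct_starWedge, smul_dotProduct, smul_eq_mul, dotProduct_comm]

lemma spinE4_eq_linear_combination (m : ℝ) (s u u' u'' : Fin 4 → ℝ) :
    spinE4 m s u u' u'' =
      (wedgeNorm s u ^ 3)⁻¹ • starWedge u'' u s
        - (3 * wedgeDot u' s u s / wedgeNorm s u ^ 5) • starWedge u' u s
        + (m / etaNorm s ^ 3) •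
          ((etaNorm u)⁻¹ • lowerIdx u' - (etaB u' u / etaNorm u ^ 3) • lowerIdx u) := by
  ext ρ
  simp only [spinE4, Pi.add_apply, Pi.sub_apply, Pi.smul_apply, smul_eq_mul]
  ring

section PseudoOrthogonal

variable {Λ : Matrix (Fin 4) (Fin 4) ℝ}

lemma etaB_mulVec_mulVec (hΛ : Λᵀ * etaMatrix * Λ = etaMatrix) (a b : Fin 4 → ℝ) :
    etaB (Λ *ᵥ a) (Λ *ᵥ b) = etaB a b := by
  simp only [etaB_eq_dotProduct, dotProduct_mulVec_of_transpose_mul_mul_eq hΛ]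

lemma lowerIdx_mulVec_vecMul (hΛ : Λᵀ * etaMatrix * Λ = etaMatrix) (a : Fin 4 → ℝ) :
    lowerIdx (Λ *ᵥ a) ᵥ* Λ = lowerIdx a := by
  simp only [lowerIdx_eq_mulVec, mulVec_mulVec_vecMul_of_transpose_mul_mul_eq hΛ]

lemma spinE4_mulVec_vecMul (hΛ : Λᵀ * etaMatrix * Λ = etaMatrix)
    (m : ℝ) (s u u' u'' : Fin 4 → ℝ) :
    spinE4 (Λ.det * m) (Λ *ᵥ s) (Λ *ᵥ u) (Λ *ᵥ u') (Λ *ᵥ u'') ᵥ* Λ =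
      Λ.det • spinE4 m s u u' u'' := by
  simp only [spinE4_eq_linear_combination, add_vecMul, sub_vecMul, smul_vecMul,
    starWedge_mulVec_vecMul, lowerIdx_mulVec_vecMul hΛ, wedgeNorm, wedgeDot, etaNorm,
    etaB_mulVec_mulVec hΛ]
  module

lemma spinE4_mulVec (hΛ : Λᵀ * etaMatrix * Λ = etaMatrix) (m : ℝ) (s u u' u'' : Fin 4 → ℝ) :
    spinE4 (Λ.det * m) (Λ *ᵥ s) (Λ *ᵥ u) (Λ *ᵥ u') (Λ *ᵥ u'') =
      Λ.det • (spinE4 m s u u' u'' ᵥ* Λ⁻¹) := by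
  rw [← smul_vecMul, ← spinE4_mulVec_vecMul hΛ, vecMul_vecMul,
    mul_nonsing_inv _ (isUnit_det_of_transpose_mul_mul_eq isUnit_det_etaMatrix hΛ), vecMul_one]

lemma spinE4_mulVec_eq_zero_iff (hΛ : Λᵀ * etaMatrix * Λ = etaMatrix)
    (m : ℝ) (s u u' u'' : Fin 4 → ℝ) :
    spinE4 (Λ.det * m) (Λ *ᵥ s) (Λ *ᵥ u) (Λ *ᵥ u') (Λ *ᵥ u'') = 0 ↔
      spinE4 m s u u' u'' = 0 := by
  have hdet := isUnit_det_of_transpose_mul_mul_eq isUnit_det_etaMatrix hΛ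
  refine ⟨fun h => ?_, fun h => by rw [spinE4_mulVec hΛ, h, zero_vecMul, smul_zero]⟩
  have hpullback := spinE4_mulVec_vecMul hΛ m s u u' u''
  rw [h, zero_vecMul] at hpullback
  exact (smul_eq_zero_iff_right hdet.ne_zero).mp hpullback.symm

end PseudoOrthogonal

theorem spinning_particle_pseudo_orthogonal_covariance_general
    (m : ℝ) (Λ : Matrix (Fin 4) (Fin 4) ℝ) (hΛ : Λᵀ * etaMatrix * Λ = etaMatrix) :
    (∀ (s u u' u'' : Fin 4 → ℝ) (ρ : Fin 4),
      spinE4 (Λ.det * m) (Λ *ᵥ s) (Λ *ᵥ u) (Λ *ᵥ u') (Λ *ᵥ u'') ρ =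
        Λ.det * ∑ σ, Λ⁻¹ σ ρ * spinE4 m s u u' u'' σ) ∧
    (∀ (s : Fin 4 → ℝ) (γ : ℝ → Fin 4 → ℝ) (τ : ℝ), ContDiffAt ℝ 3 γ τ →
      ((∀ ρ, spinE4 m s (deriv γ τ) (deriv (deriv γ) τ) (deriv (deriv (deriv γ)) τ) ρ = 0) ↔
        ∀ ρ, spinE4 (Λ.det * m) (Λ *ᵥ s) (deriv (fun t => Λ *ᵥ γ t) τ)
          (deriv (deriv fun t => Λ *ᵥ γ t) τ)
          (deriv (deriv (deriv fun t => Λ *ᵥ γ t)) τ) ρ = 0)) := by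
  refine ⟨fun s u u' u'' ρ => ?_, fun s γ τ _ => ?_⟩
  · rw [spinE4_mulVec hΛ, Pi.smul_apply, smul_eq_mul, vecMul_eq_sum]
    simp [mul_comm]
  · have hderiv := deriv_mulVec_of_isUnit_det
      (isUnit_det_of_transpose_mul_mul_eq isUnit_det_etaMatrix hΛ)
    simp only [hderiv]
    simpa only [funext_iff, Pi.zero_apply] using (spinE4_mulVec_eq_zero_iff hΛ m s _ _ _).symm

end

/-- Pseudo-orthogonal covariance of the Euler–Poisson equations (36):
for every `Λ` in the special pseudo-orthogonal group (`Λᵀ η Λ = η`, `det Λ = 1`), the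
expressions (36) transform as `𝓔_ρ(Λs; Λu, Λu̇, Λü) = Σ_σ (Λ⁻¹)^σ{}_ρ 𝓔_σ(s; u, u̇, ü)`;
consequently a curve `γ` solves (36) for `s` iff `Λ∘γ` solves (36) for `Λs`: the
equations (36) are invariant under the special pseudo-orthogonal group acting
simultaneously on the world-line and on the spin four-vector. -/
theorem spinning_particle_pseudo_orthogonal_covariance
    (m : ℝ) (Λ : Matrix (Fin 4) (Fin 4) ℝ)
    (hΛ : Λ.transpose * etaMatrix * Λ = etaMatrix) (hdet : Λ.det = 1) :
    (∀ s u u' u'' : Fin 4 → ℝ, etaB s s < 0 → 0 < etaB u u →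
      ∀ ρ : Fin 4,
        spinE4 m (Λ.mulVec s) (Λ.mulVec u) (Λ.mulVec u') (Λ.mulVec u'') ρ
          = ∑ σ : Fin 4, Λ⁻¹ σ ρ * spinE4 m s u u' u'' σ) ∧
    (∀ s : Fin 4 → ℝ, etaB s s < 0 →
      ∀ I : Set ℝ, IsOpen I → ∀ γ : ℝ → (Fin 4 → ℝ), ContDiffOn ℝ (⊤ : ℕ∞) γ I →
      (∀ τ ∈ I, 0 < etaB (deriv γ τ) (deriv γ τ)) →
      ((∀ τ ∈ I, ∀ ρ : Fin 4,
          spinE4 m s (deriv γ τ) (deriv (deriv γ) τ)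
            (deriv (deriv (deriv γ)) τ) ρ = 0) ↔
       (∀ τ ∈ I, ∀ ρ : Fin 4,
          spinE4 m (Λ.mulVec s) (deriv (fun σ => Λ.mulVec (γ σ)) τ)
            (deriv (deriv (fun σ => Λ.mulVec (γ σ))) τ)
            (deriv (deriv (deriv (fun σ => Λ.mulVec (γ σ)))) τ) ρ = 0))) := by
  have hcov := spinning_particle_pseudo_orthogonal_covariance_general m Λ hΛ
  simp only [hdet, one_mul] at hcov
  exact ⟨fun s u u' u'' _ _ => hcov.1 s u u' u'', fun s _ I hI γ hγ _ => forall₂_congr fun τ hτ =>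
    hcov.2 s γ τ (contDiffAt_infty.mp (hγ.contDiffAt (hI.mem_nhds hτ)) 3)⟩

end
end

section
/- Contraction identity for the spinning-particle Euler–Poisson expressions: let 𝓔 be as in the context. Then identically on its domain, Σ_{ρ=0}^{3} u^ρ · 𝓔_ρ(s; u, u̇, ü) = 0; i.e. the covector 𝓔 annihilates the velocity u, as must hold for the Euler–Poisson expressions of any parameter-invariant variational problem. -/
/-!
Contracting the Levi-Civita symbol with four vectors gives the determinant with these vectors as
rows, so `v^ρ [∗(a∧b∧c)]_ρ = det (v, a, b, c)`, and both Hodge star terms of `𝓔` vanish on `v = u`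
because the row `u` is repeated. The covector in the mass term is the derivative of `u♭ / ‖u‖`
along a curve with velocity `u` and acceleration `u̇`. It annihilates `u` because the unit velocity
`n = u / ‖u‖` has `η(n, n)` constant, which makes `ṅ` orthogonal to `n`. The scalar factors in
front of the three covectors do not matter.
-/

noncomputable section

section LeviCivita

open Matrix

theorem det_eq_sum_mul_det_updateRow_single {n R : Type*} [DecidableEq n] [Fintype n] [CommRing R]
    (A : Matrix n n R) (i : n) :
    A.det = ∑ j, A i j * (A.updateRow i (Pi.single j 1)).det := by
  simp only [A.det_eq_sum_mul_adjugate_row i, adjugate_apply]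

theorem leviCivita_eq_det_updateRow_single (A : Matrix (Fin 4) (Fin 4) ℝ) (ρ μ ν σ : Fin 4) :
    leviCivita ρ μ ν σ =
      ((((A.updateRow 0 (Pi.single ρ 1)).updateRow 1 (Pi.single μ 1)).updateRow 2
        (Pi.single ν 1)).updateRow 3 (Pi.single σ 1)).det := by
  unfold leviCivita
  congr 1
  ext i j
  fin_cases i <;> simp [updateRow_apply, Pi.single_apply, eq_comm]

theorem det_eq_sum_mul_leviCivita (A : Matrix (Fin 4) (Fin 4) ℝ) :
    A.det = ∑ ρ, ∑ μ, ∑ ν, ∑ σ, A 0 ρ * (A 1 μ * (A 2 ν * (A 3 σ * leviCivita ρ μ ν σ))) := by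
  simp only [← Finset.mul_sum, leviCivita_eq_det_updateRow_single A]
  rw [det_eq_sum_mul_det_updateRow_single A 0]
  congr! 2 with ρ
  rw [det_eq_sum_mul_det_updateRow_single _ 1]
  congr! 2 with μ
  rw [det_eq_sum_mul_det_updateRow_single _ 2]
  congr! 2 with ν
  exact det_eq_sum_mul_det_updateRow_single _ 3

theorem sum_mul_starWedge (v a b c : Fin 4 → ℝ) :
    ∑ ρ, v ρ * starWedge a b c ρ = (of ![v, a, b, c]).det := by
  simp only [det_eq_sum_mul_leviCivita, starWedge, Finset.mul_sum]
  congr! 4 with ρ _ μ _ ν _ σ _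
  change _ = v ρ * (a μ * (b ν * (c σ * leviCivita ρ μ ν σ)))
  ring

theorem sum_mul_starWedge_self (a v c : Fin 4 → ℝ) :
    ∑ ρ, v ρ * starWedge a v c ρ = 0 := by
  rw [sum_mul_starWedge]
  exact det_zero_of_row_eq (i := 0) (j := 2) (by decide) rfl

end LeviCivita

theorem sum_mul_lowerIdx (v a : Fin 4 → ℝ) : ∑ ρ, v ρ * lowerIdx a ρ = etaB a v := by
  simp only [Fin.sum_univ_four, lowerIdx, etaB, Fin.reduceEq, if_true, if_false]
  ring

theorem etaNorm_sq {u : Fin 4 → ℝ} (hu : 0 ≤ etaB u u) : etaNorm u ^ 2 = etaB u u := by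
  rw [etaNorm, Real.sq_sqrt (abs_nonneg _), abs_of_nonneg hu]

theorem etaNorm_pos {u : Fin 4 → ℝ} (hu : etaB u u ≠ 0) : 0 < etaNorm u :=
  Real.sqrt_pos.mpr (abs_pos.mpr hu)

theorem sum_mul_lowerIdx_div_etaNorm_sub_eq_zero (u' : Fin 4 → ℝ) {u : Fin 4 → ℝ}
    (hu : 0 < etaB u u) :
    ∑ ρ, u ρ * (lowerIdx u' ρ / etaNorm u - etaB u' u * lowerIdx u ρ / etaNorm u ^ 3) = 0 := by
  have etaNorm_ne_zero : etaNorm u ≠ 0 := (etaNorm_pos hu.ne').ne'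
  calc
    _ = (∑ ρ, u ρ * lowerIdx u' ρ) / etaNorm u
          - etaB u' u * (∑ ρ, u ρ * lowerIdx u ρ) / etaNorm u ^ 3 := by
      simp only [Finset.mul_sum, Finset.sum_div, ← Finset.sum_sub_distrib]
      congr! 1
      ring
    _ = etaB u' u / etaNorm u - etaB u' u * etaNorm u ^ 2 / etaNorm u ^ 3 := by
      rw [sum_mul_lowerIdx, sum_mul_lowerIdx, etaNorm_sq hu.le]
    _ = 0 := by
      field_simp
      ring

theorem spinning_particle_contraction_identity_general (α β γ : ℝ)
    (s u u' u'' : Fin 4 → ℝ) (hu : 0 < etaB u u) :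
    ∑ ρ, u ρ * (α * starWedge u'' u s ρ + β * starWedge u' u s ρ
      + γ * (lowerIdx u' ρ / etaNorm u - etaB u' u * lowerIdx u ρ / etaNorm u ^ 3)) = 0 := by
  simp only [mul_add, mul_left_comm (u _), Finset.sum_add_distrib, ← Finset.mul_sum,
    sum_mul_starWedge_self, sum_mul_lowerIdx_div_etaNorm_sub_eq_zero u' hu, mul_zero, add_zero]

/-- Contraction identity for the spinning-particle Euler–Poisson
expressions (36): identically on the domain `{η(s,s) < 0, η(u,u) > 0}`,
`Σ_ρ u^ρ 𝓔_ρ(s; u, u̇, ü) = 0`; the covector `𝓔` annihilates the velocity `u`, as must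
hold for the Euler–Poisson expressions of any parameter-invariant variational
problem. -/
theorem spinning_particle_contraction_identity (m : ℝ)
    (s u u' u'' : Fin 4 → ℝ) (hs : etaB s s < 0) (hu : 0 < etaB u u) :
    ∑ ρ : Fin 4, u ρ * spinE4 m s u u' u'' ρ = 0 := by
  rw [← spinning_particle_contraction_identity_general (1 / wedgeNorm s u ^ 3)
    (-3 * wedgeDot u' s u s / wedgeNorm s u ^ 5) (m / etaNorm s ^ 3) s u u' u'' hu]
  exact Finset.sum_congr rfl fun ρ _ => by unfold spinE4; ring

end
end
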